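/- arXiv:2511.22162 — 3 statements merged into one kernel-verified Lean document; each statement's English description precedes it below -/
import Mathlib

section
/- Translation identity for linear magnetic potentials: let A : ℝ² → ℝ² be an ℝ-linear map, V : ℝ² → ℝ continuous, B ⊂ ℝ² a bounded open box and y ∈ ℝ². Then λ₁^{y+B}(A, V) = λ₁^{B}(A, V(y + ·)), where y + B = {y + x : x ∈ B} and V(y + ·) is the map x ↦ V(y + x). (The proof uses the unitary substitution u(x) = e^{-iA(y)·(x−y)} w(x−y).) -/
open Complex

/-- Partial derivative in direction `j` of a complex-valued function on `ℝ²`. -/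
noncomputable def pd (j : Fin 2) (f : (Fin 2 → ℝ) → ℂ) (x : Fin 2 → ℝ) : ℂ :=
  fderiv ℝ f x (Pi.single j 1)

/-- Partial derivative in direction `j` of a real-valued function on `ℝ²`. -/
noncomputable def pdR (j : Fin 2) (f : (Fin 2 → ℝ) → ℝ) (x : Fin 2 → ℝ) : ℝ :=
  fderiv ℝ f x (Pi.single j 1)

/-- The magnetic derivative `(i∂_j + A_j) w`. -/
noncomputable def magOp (A : (Fin 2 → ℝ) → Fin 2 → ℝ) (j : Fin 2)
    (w : (Fin 2 → ℝ) → ℂ) (x : Fin 2 → ℝ) : ℂ :=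
  Complex.I * pd j w x + (A x j : ℂ) * w x

/-- The magnetic Laplacian `(i∇ + A)² u = ∑_j (i∂_j + A_j)(i∂_j u + A_j u)`. -/
noncomputable def magLap (A : (Fin 2 → ℝ) → Fin 2 → ℝ) (u : (Fin 2 → ℝ) → ℂ)
    (x : Fin 2 → ℝ) : ℂ :=
  ∑ j : Fin 2, magOp A j (magOp A j u) x

open MeasureTheory

/-- Open box with corners `a`, `b`. -/
def boxIoo (a b : Fin 2 → ℝ) : Set (Fin 2 → ℝ) := {y | ∀ j, y j ∈ Set.Ioo (a j) (b j)}

/-- The open box `B_{c,L} = c + (−L/2, L/2)²`. -/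
def box (c : Fin 2 → ℝ) (L : ℝ) : Set (Fin 2 → ℝ) := {y | ∀ j, |y j - c j| < L / 2}

/-- `u` is a test function on `B`: smooth, compactly supported, with support in `B`. -/
def testFun (B : Set (Fin 2 → ℝ)) (u : (Fin 2 → ℝ) → ℂ) : Prop :=
  ContDiff ℝ (⊤ : ℕ∞) u ∧ HasCompactSupport u ∧ tsupport u ⊆ B

/-- The magnetic Schrödinger quadratic form
`Q(u) = ∫_B ( ∑_j |i∂_j u + A_j u|² + V|u|² )`. -/
noncomputable def qform (B : Set (Fin 2 → ℝ)) (A : (Fin 2 → ℝ) → Fin 2 → ℝ)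
    (V : (Fin 2 → ℝ) → ℝ) (u : (Fin 2 → ℝ) → ℂ) : ℝ :=
  ∫ x in B, ((∑ j : Fin 2, ‖Complex.I * pd j u x + (A x j : ℂ) * u x‖ ^ 2)
      + V x * ‖u x‖ ^ 2)

/-- The variational principal eigenvalue `λ₁^B(A, V)`. -/
noncomputable def lam1 (B : Set (Fin 2 → ℝ)) (A : (Fin 2 → ℝ) → Fin 2 → ℝ)
    (V : (Fin 2 → ℝ) → ℝ) : ℝ :=
  sInf { E | ∃ u, testFun B u ∧ (∫ x in B, ‖u x‖ ^ 2) = 1 ∧ E = qform B A V u }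

/-- Translation and gauge change. -/
noncomputable def gaugeT (c s : Fin 2 → ℝ) (u : (Fin 2 → ℝ) → ℂ) (z : Fin 2 → ℝ) : ℂ :=
  Complex.exp (Complex.I * ((∑ j, c j * z j : ℝ) : ℂ)) * u (s + z)

lemma gaugeT_norm (c s : Fin 2 → ℝ) (u : (Fin 2 → ℝ) → ℂ) (z : Fin 2 → ℝ) :
    ‖gaugeT c s u z‖ = ‖u (s + z)‖ := by
  unfold gaugeT
  rw [norm_mul, mul_comm Complex.I, Complex.norm_exp_ofReal_mul_I, one_mul]

lemma setInt_image (s : Fin 2 → ℝ) (B : Set (Fin 2 → ℝ)) (f : (Fin 2 → ℝ) → ℝ) :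
    ∫ x in (fun x => s + x) '' B, f x = ∫ z in B, f (s + z) :=
  (measurePreserving_add_left volume s).setIntegral_image_emb
    (measurableEmbedding_addLeft s) f B

lemma gaugeT_pd (c s : Fin 2 → ℝ) (u : (Fin 2 → ℝ) → ℂ) (hu : Differentiable ℝ u)
    (j : Fin 2) (z : Fin 2 → ℝ) :
    pd j (gaugeT c s u) z = Complex.exp (Complex.I * ((∑ j, c j * z j : ℝ) : ℂ)) *
      (pd j u (s + z) + Complex.I * (c j : ℂ) * u (s + z)) := by
  have h1 : HasFDerivAt (fun z : Fin 2 → ℝ => ∑ j, c j * z j)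
      (∑ j, c j • (ContinuousLinearMap.proj j : (Fin 2 → ℝ) →L[ℝ] ℝ)) z := by
    have := (∑ j, c j • (ContinuousLinearMap.proj j : (Fin 2 → ℝ) →L[ℝ] ℝ)).hasFDerivAt (x := z)
    refine this.congr_of_eventuallyEq (Filter.Eventually.of_forall fun x => ?_)
    simp
  have h2 := ((Complex.ofRealCLM.hasFDerivAt.comp z h1).const_mul Complex.I).cexp
  have h3 : HasFDerivAt (fun z => u (s + z)) (fderiv ℝ u (s + z)) z := by
    have := (hu (s + z)).hasFDerivAt.comp z ((hasFDerivAt_id z).const_add s)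
    rw [ContinuousLinearMap.comp_id] at this
    exact this
  have h4 := h2.mul h3
  have h5 : HasFDerivAt (gaugeT c s u) _ z := h4
  unfold pd
  rw [h5.fderiv]
  fin_cases j <;> simp [Fin.sum_univ_two] <;> ring

lemma gaugeT_test (c s : Fin 2 → ℝ) (u : (Fin 2 → ℝ) → ℂ) (B : Set (Fin 2 → ℝ))
    (hu : testFun ((fun x => s + x) '' B) u) : testFun B (gaugeT c s u) := by
  obtain ⟨h1, h2, h3⟩ := hu
  have h0 : HasCompactSupport (fun z => u (s + z)) :=
    h2.comp_homeomorph (Homeomorph.addLeft s)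
  refine ⟨?_, h0.mul_left, ?_⟩
  · unfold gaugeT
    refine ContDiff.mul ?_ (h1.comp (contDiff_const.add contDiff_id))
    have hp : ContDiff ℝ (⊤ : ℕ∞) (fun z : Fin 2 → ℝ => ∑ j, c j * z j) :=
      ContDiff.sum fun j _ => contDiff_const.mul (contDiff_apply ℝ ℝ j)
    exact ContDiff.cexp (contDiff_const.mul (Complex.ofRealCLM.contDiff.comp hp))
  · have h4 : tsupport (gaugeT c s u) ⊆ tsupport (fun z => u (s + z)) :=
      tsupport_mul_subset_right
    intro z hz
    have h5 := tsupport_comp_subset_preimage u (continuous_const_add s) (h4 hz)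
    obtain ⟨x, hx, hxz⟩ := h3 h5
    have : x = z := add_left_cancel hxz
    exact this ▸ hx

lemma gaugeT_qform (c s : Fin 2 → ℝ) (u : (Fin 2 → ℝ) → ℂ) (B : Set (Fin 2 → ℝ))
    (hu : Differentiable ℝ u) (A A' : (Fin 2 → ℝ) → Fin 2 → ℝ) (V V' : (Fin 2 → ℝ) → ℝ)
    (hA : ∀ z j, A' z j = A (s + z) j + c j) (hV : ∀ z, V' z = V (s + z)) :
    qform B A' V' (gaugeT c s u) = qform ((fun x => s + x) '' B) A V u := by
  unfold qform
  rw [setInt_image]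
  congr 1
  funext z
  rw [hV, gaugeT_norm]
  congr 1
  refine Finset.sum_congr rfl fun j _ => ?_
  congr 1
  rw [gaugeT_pd c s u hu, hA]
  have : Complex.I * (Complex.exp (Complex.I * ((∑ j, c j * z j : ℝ) : ℂ)) *
      (pd j u (s + z) + Complex.I * (c j : ℂ) * u (s + z))) +
      ((A (s + z) j + c j : ℝ) : ℂ) * gaugeT c s u z =
      Complex.exp (((∑ j, c j * z j : ℝ) : ℂ) * Complex.I) *
      (Complex.I * pd j u (s + z) + (A (s + z) j : ℂ) * u (s + z)) := by
    unfold gaugeT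
    rw [mul_comm Complex.I ((∑ j, c j * z j : ℝ) : ℂ)]
    rw [Complex.ofReal_add]
    linear_combination (Complex.exp (((∑ j, c j * z j : ℝ) : ℂ) * Complex.I) * (c j : ℂ) *
      u (s + z)) * Complex.I_mul_I
  rw [this, norm_mul, Complex.norm_exp_ofReal_mul_I, one_mul]

lemma gaugeT_mem (c s : Fin 2 → ℝ) (B : Set (Fin 2 → ℝ))
    (A A' : (Fin 2 → ℝ) → Fin 2 → ℝ) (V V' : (Fin 2 → ℝ) → ℝ)
    (hA : ∀ z j, A' z j = A (s + z) j + c j) (hV : ∀ z, V' z = V (s + z)) (E : ℝ)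
    (h : ∃ u, testFun ((fun x => s + x) '' B) u ∧
      (∫ x in (fun x => s + x) '' B, ‖u x‖ ^ 2) = 1 ∧ E = qform ((fun x => s + x) '' B) A V u) :
    ∃ u, testFun B u ∧ (∫ x in B, ‖u x‖ ^ 2) = 1 ∧ E = qform B A' V' u := by
  obtain ⟨u, h1, h2, h3⟩ := h
  refine ⟨gaugeT c s u, gaugeT_test c s u B h1, ?_, ?_⟩
  · simp only [gaugeT_norm]
    rw [← h2, setInt_image]
  · rw [h3, gaugeT_qform c s u B (h1.1.differentiable (by simp)) A A' V V' hA hV]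

/-- Translation identity for linear magnetic potentials:
`λ₁^{y+B}(A, V) = λ₁^{B}(A, V(y + ·))` when `A` is ℝ-linear. -/
theorem lam1_translation_linear (A : (Fin 2 → ℝ) →ₗ[ℝ] (Fin 2 → ℝ))
    (V : (Fin 2 → ℝ) → ℝ) (hV : Continuous V)
    (a b : Fin 2 → ℝ) (hab : ∀ j, a j < b j) (y : Fin 2 → ℝ) :
    lam1 ((fun x => y + x) '' boxIoo a b) (fun x => A x) V
      = lam1 (boxIoo a b) (fun x => A x) (fun x => V (y + x)) := by
  unfold lam1
  congr 1
  ext E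
  constructor
  · exact gaugeT_mem (-(A y)) y (boxIoo a b) _ _ _ _ (by intro z j; simp) (fun z => rfl) E
  · intro h
    have hB : (fun x => -y + x) '' ((fun x => y + x) '' boxIoo a b) = boxIoo a b := by
      rw [Set.image_image]; simp
    refine gaugeT_mem (A y) (-y) ((fun x => y + x) '' boxIoo a b) (fun x => A x) _
      (fun x => V (y + x)) _ (by intro z j; simp) (fun z => by simp) E ?_
    rw [hB]
    exact h
end

section
/- Existence of a quadratic partition of unity adapted to boxes: there exists a constant K > 0 such that for every r > 0 there is a family (η_k)_{k∈ℤ²} of smooth functions ℝ² → [0,1] with the following properties: (i) the support of η_k is contained in the closed box \overline{B_{kr, 3r/2}}; (ii) ∑_{k∈ℤ²} η_k(x)² = 1 for every x ∈ ℝ² (a locally finite sum); (iii) ∑_{k∈ℤ²} |∇η_k(x)|² ≤ K/r² for every x ∈ ℝ². -/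
open Complex

/-- The closed box `\overline{B_{c,L}}` of centre `c` and side `L`. -/
def closedBox (c : Fin 2 → ℝ) (L : ℝ) : Set (Fin 2 → ℝ) := {y | ∀ j, |y j - c j| ≤ L / 2}

/-- One-dimensional profile. -/
noncomputable def thetaP (t : ℝ) : ℝ :=
  Real.cos (Real.pi / 2 * Real.smoothTransition (2 * t - 1 / 2)) *
    Real.cos (Real.pi / 2 * Real.smoothTransition (-2 * t - 1 / 2))

lemma cos_st_mem (u : ℝ) : Real.cos (Real.pi / 2 * Real.smoothTransition u) ∈ Set.Icc (0:ℝ) 1 := by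
  have h0 := Real.smoothTransition.nonneg u
  have h1 := Real.smoothTransition.le_one u
  have hp := Real.pi_pos
  refine ⟨Real.cos_nonneg_of_mem_Icc ⟨?_, ?_⟩, Real.cos_le_one _⟩ <;> nlinarith

lemma thetaP_mem (t : ℝ) : thetaP t ∈ Set.Icc (0:ℝ) 1 := by
  have h1 := cos_st_mem (2 * t - 1 / 2)
  have h2 := cos_st_mem (-2 * t - 1 / 2)
  exact ⟨mul_nonneg h1.1 h2.1, mul_le_one₀ h1.2 h2.1 h2.2⟩

lemma thetaP_contDiff : ContDiff ℝ (⊤ : ℕ∞) thetaP := by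
  unfold thetaP
  have hs : ContDiff ℝ (⊤ : ℕ∞) Real.smoothTransition := Real.smoothTransition.contDiff
  refine ContDiff.mul ?_ ?_
  · exact Real.contDiff_cos.comp (contDiff_const.mul (hs.comp (by fun_prop)))
  · exact Real.contDiff_cos.comp (contDiff_const.mul (hs.comp (by fun_prop)))

lemma thetaP_zero {t : ℝ} (h : 3 / 4 ≤ |t|) : thetaP t = 0 := by
  unfold thetaP
  rcases le_abs.1 h with h | h
  · rw [Real.smoothTransition.one_of_one_le (x := 2 * t - 1 / 2) (by linarith)]
    simp
  · rw [Real.smoothTransition.one_of_one_le (x := -2 * t - 1 / 2) (by linarith)]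
    simp

lemma st_one_sub (u : ℝ) :
    Real.smoothTransition (1 - u) = 1 - Real.smoothTransition u := by
  have h := Real.smoothTransition.pos_denom u
  unfold Real.smoothTransition
  rw [sub_sub_cancel, eq_sub_iff_add_eq, add_comm (expNegInvGlue (1 - u)) (expNegInvGlue u),
    ← add_div, add_comm (expNegInvGlue (1 - u)), div_self h.ne']

lemma thetaP_sq {t : ℝ} (h0 : 0 ≤ t) (h1 : t ≤ 1) : thetaP t ^ 2 + thetaP (t - 1) ^ 2 = 1 := by
  unfold thetaP
  rw [Real.smoothTransition.zero_of_nonpos (x := -2 * t - 1 / 2) (by linarith),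
    Real.smoothTransition.zero_of_nonpos (x := 2 * (t - 1) - 1 / 2) (by linarith),
    show -2 * (t - 1) - 1 / 2 = 1 - (2 * t - 1 / 2) by ring, st_one_sub, mul_sub, mul_one,
    Real.cos_pi_div_two_sub]
  simp

lemma thetaP_tsupport : tsupport thetaP ⊆ Set.Icc (-(3/4)) (3/4) := by
  refine closure_minimal ?_ isClosed_Icc
  intro t ht
  by_contra h
  refine ht (thetaP_zero ?_)
  by_contra h'
  exact h (abs_le.1 (not_le.1 h').le)

lemma thetaP_deriv_zero {t : ℝ} (h : 3 / 4 < |t|) : deriv thetaP t = 0 := by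
  by_contra h'
  have : t ∈ tsupport thetaP := support_deriv_subset h'
  have := abs_le.2 (thetaP_tsupport this)
  linarith

lemma thetaP_deriv_bdd : ∃ M : ℝ, ∀ t, deriv thetaP t ^ 2 ≤ M := by
  have hc : Continuous (deriv thetaP) := thetaP_contDiff.continuous_deriv (by norm_num)
  obtain ⟨C, hC⟩ := (isCompact_Icc (a := (-1:ℝ)) (b := 1)).exists_bound_of_continuousOn
    hc.continuousOn
  refine ⟨C ^ 2, fun t => ?_⟩
  by_cases h : |t| ≤ 1
  · have := hC t (abs_le.1 h)
    rw [Real.norm_eq_abs] at this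
    rw [← sq_abs]
    exact pow_le_pow_left₀ (abs_nonneg _) this 2
  · rw [thetaP_deriv_zero (by linarith [not_le.1 h])]
    simpa using sq_nonneg C

/-- The relevant indices. -/
noncomputable def idxP (r : ℝ) (x : Fin 2 → ℝ) : Finset (Fin 2 → ℤ) :=
  Fintype.piFinset fun j => {⌊x j / r⌋, ⌊x j / r⌋ + 1}

lemma far_of_not_mem {r : ℝ} {x : Fin 2 → ℝ} {k : Fin 2 → ℤ} (h : k ∉ idxP r x) :
    ∃ j, 1 ≤ |x j / r - k j| := by
  simp only [idxP, Fintype.mem_piFinset, not_forall, Finset.mem_insert, Finset.mem_singleton,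
    not_or] at h
  obtain ⟨j, h1, h2⟩ := h
  refine ⟨j, ?_⟩
  have hl := Int.floor_le (x j / r)
  have hu := Int.lt_floor_add_one (x j / r)
  rcases lt_or_gt_of_ne h1 with h3 | h3
  · have : (k j : ℝ) + 1 ≤ ⌊x j / r⌋ := by exact_mod_cast h3
    exact le_abs.2 (Or.inl (by linarith))
  · have h4 : ⌊x j / r⌋ + 2 ≤ k j := by omega
    have : (⌊x j / r⌋ : ℝ) + 2 ≤ k j := by exact_mod_cast h4
    exact le_abs.2 (Or.inr (by linarith))

/-- The partition. -/
noncomputable def etaP (r : ℝ) (k : Fin 2 → ℤ) (x : Fin 2 → ℝ) : ℝ :=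
  thetaP (x 0 / r - k 0) * thetaP (x 1 / r - k 1)

lemma theta_hasF (r c : ℝ) (j : Fin 2) (x : Fin 2 → ℝ) :
    HasFDerivAt (fun y : Fin 2 → ℝ => thetaP (y j / r - c))
      (deriv thetaP (x j / r - c) • (r⁻¹ • ContinuousLinearMap.proj (R := ℝ) (φ := fun _ : Fin 2 => ℝ) j)) x := by
  have hd : HasDerivAt thetaP (deriv thetaP (x j / r - c)) (x j / r - c) :=
    (thetaP_contDiff.differentiable (by norm_num) _).hasDerivAt
  have hg : HasFDerivAt (fun y : Fin 2 → ℝ => y j / r - c)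
      (r⁻¹ • ContinuousLinearMap.proj (R := ℝ) (φ := fun _ : Fin 2 => ℝ) j) x := by
    have := ((hasFDerivAt_apply (𝕜 := ℝ) j x).const_mul r⁻¹).sub_const c
    simpa only [div_eq_inv_mul] using this
  exact hd.comp_hasFDerivAt x hg

lemma pdR_etaP (r : ℝ) (k : Fin 2 → ℤ) (x : Fin 2 → ℝ) :
    pdR 0 (etaP r k) x = r⁻¹ * (deriv thetaP (x 0 / r - k 0) * thetaP (x 1 / r - k 1)) ∧
    pdR 1 (etaP r k) x = r⁻¹ * (thetaP (x 0 / r - k 0) * deriv thetaP (x 1 / r - k 1)) := by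
  have h := (theta_hasF r (k 0) 0 x).mul (theta_hasF r (k 1) 1 x)
  have h' : fderiv ℝ (etaP r k) x = _ := h.fderiv
  unfold pdR
  rw [h']
  constructor <;> simp <;> ring

lemma etaP_supp {r : ℝ} {k : Fin 2 → ℤ} {x : Fin 2 → ℝ} (h : etaP r k x ≠ 0) (j : Fin 2) :
    |x j / r - k j| ≤ 3 / 4 := by
  by_contra h'
  apply h
  have := thetaP_zero (not_le.1 h').le
  unfold etaP
  fin_cases j <;> simp_all

/-- Existence of a quadratic partition of unity adapted to boxes: there is a
constant `K > 0` such that for every `r > 0` there is a smooth family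
`(η_k)_{k ∈ ℤ²}` with values in `[0,1]`, `supp η_k ⊆ closure B_{kr, 3r/2}`,
locally finite supports, `∑_k η_k² = 1` and `∑_k |∇η_k|² ≤ K/r²`. -/
theorem exists_quadratic_partition :
    ∃ K > (0 : ℝ), ∀ r > (0 : ℝ), ∃ η : (Fin 2 → ℤ) → (Fin 2 → ℝ) → ℝ,
      (∀ k, ContDiff ℝ (⊤ : ℕ∞) (η k)) ∧
      (∀ k x, η k x ∈ Set.Icc (0 : ℝ) 1) ∧
      (∀ k, tsupport (η k) ⊆ closedBox (fun j => (k j : ℝ) * r) (3 * r / 2)) ∧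
      LocallyFinite (fun k => Function.support (η k)) ∧
      (∀ x, ∑' k, (η k x) ^ 2 = 1) ∧
      (∀ x, (∑' k, ∑ j : Fin 2, (pdR j (η k) x) ^ 2) ≤ K / r ^ 2) := by
  obtain ⟨M, hM⟩ := thetaP_deriv_bdd
  have hM0 : 0 ≤ M := (sq_nonneg _).trans (hM 0)
  refine ⟨8 * M + 1, by positivity, fun r hr => ⟨etaP r, ?_, ?_, ?_, ?_, ?_, ?_⟩⟩
  · intro k
    unfold etaP
    refine ContDiff.mul ?_ ?_
    · exact thetaP_contDiff.comp (by fun_prop)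
    · exact thetaP_contDiff.comp (by fun_prop)
  · intro k x
    have h1 := thetaP_mem (x 0 / r - k 0)
    have h2 := thetaP_mem (x 1 / r - k 1)
    exact ⟨mul_nonneg h1.1 h2.1, mul_le_one₀ h1.2 h2.1 h2.2⟩
  · intro k
    refine closure_minimal ?_ ?_
    · intro x hx j
      have h := etaP_supp hx j
      have e : x j - k j * r = r * (x j / r - k j) := by field_simp
      show |x j - k j * r| ≤ _
      rw [e, abs_mul, abs_of_pos hr]
      nlinarith
    · unfold closedBox
      rw [Set.ofPred_forall]
      exact isClosed_iInter fun j => isClosed_le (by fun_prop) (by fun_prop)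
  · intro x
    refine ⟨Metric.ball x r, Metric.ball_mem_nhds x hr, ?_⟩
    refine (Fintype.piFinset fun j => Finset.Icc (⌊x j / r⌋ - 3) (⌊x j / r⌋ + 3)).finite_toSet.subset ?_
    rintro k ⟨y, hy, hyx⟩
    simp only [Finset.mem_coe, Fintype.mem_piFinset, Finset.mem_Icc]
    intro j
    have h := abs_le.1 (etaP_supp hy j)
    have hd : |y j - x j| < r := by
      have := (dist_le_pi_dist y x j).trans_lt hyx
      rwa [Real.dist_eq] at this
    have hd' : |y j / r - x j / r| < 1 := by
      rw [← sub_div, abs_div, abs_of_pos hr, div_lt_one hr]; exact hd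
    have hd2 := abs_lt.1 hd'
    have hl := Int.floor_le (x j / r)
    have hu := Int.lt_floor_add_one (x j / r)
    constructor
    · have : ((⌊x j / r⌋ - 3 : ℤ) : ℝ) ≤ k j := by push_cast; linarith
      exact_mod_cast this
    · have : (k j : ℝ) ≤ ((⌊x j / r⌋ + 3 : ℤ) : ℝ) := by push_cast; linarith
      exact_mod_cast this
  · intro x
    rw [tsum_eq_sum (s := idxP r x)]
    · have e : ∀ k : Fin 2 → ℤ, etaP r k x ^ 2 = ∏ j, thetaP (x j / r - k j) ^ 2 := by
        intro k; rw [Fin.prod_univ_two, etaP, mul_pow]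
      simp only [e, idxP]
      rw [← Finset.prod_univ_sum (fun j => {⌊x j / r⌋, ⌊x j / r⌋ + 1})
        (fun j (n : ℤ) => thetaP (x j / r - n) ^ 2)]
      refine Finset.prod_eq_one fun j _ => ?_
      rw [Finset.sum_pair (by simp)]
      have hl := Int.floor_le (x j / r)
      have hu := Int.lt_floor_add_one (x j / r)
      push_cast
      rw [← sub_sub]
      exact thetaP_sq (by linarith) (by linarith)
    · intro k hk
      obtain ⟨j, hj⟩ := far_of_not_mem hk
      by_contra h
      have := etaP_supp (r := r) (k := k) (x := x) (fun h0 => h (by rw [h0]; simp)) j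
      linarith
  · intro x
    rw [tsum_eq_sum (s := idxP r x)]
    · have hb : ∀ k ∈ idxP r x, ∑ j : Fin 2, (pdR j (etaP r k) x) ^ 2 ≤ 2 * M / r ^ 2 := by
        intro k _
        obtain ⟨h0, h1⟩ := pdR_etaP r k x
        rw [Fin.sum_univ_two, h0, h1]
        have hs : ∀ t, thetaP t ^ 2 ≤ 1 := fun t => pow_le_one₀ (thetaP_mem t).1 (thetaP_mem t).2
        have a := mul_le_mul (hM (x 0 / r - k 0)) (hs (x 1 / r - k 1)) (sq_nonneg _) hM0
        have b := mul_le_mul (hM (x 1 / r - k 1)) (hs (x 0 / r - k 0)) (sq_nonneg _) hM0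
        rw [mul_pow, mul_pow, mul_pow, mul_pow, ← mul_add, inv_pow, inv_mul_eq_div]
        gcongr
        linarith
      refine (Finset.sum_le_card_nsmul _ _ _ hb).trans ?_
      have hc : (idxP r x).card ≤ 4 := by
        rw [idxP, Fintype.card_piFinset, Fin.prod_univ_two]
        exact Nat.mul_le_mul Finset.card_le_two Finset.card_le_two
      have hc' : ((idxP r x).card : ℝ) ≤ 4 := by exact_mod_cast hc
      rw [nsmul_eq_mul]
      calc _ ≤ 4 * (2 * M / r ^ 2) := by gcongr
        _ = (8 * M) / r ^ 2 := by ring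
        _ ≤ _ := by gcongr; linarith
    · intro k hk
      obtain ⟨j, hj⟩ := far_of_not_mem hk
      have z1 := thetaP_zero (t := x j / r - k j) (by linarith)
      have z2 := thetaP_deriv_zero (t := x j / r - k j) (by linarith)
      obtain ⟨h0, h1⟩ := pdR_etaP r k x
      rw [Fin.sum_univ_two, h0, h1]
      fin_cases j <;> simp_all
end

section
/- Eigenvalue comparison between a large box and sub-boxes: there exists a constant K > 0 such that for every continuous A : ℝ² → ℝ², every continuous V : ℝ² → ℝ, every L ≥ 1 and every r ∈ (0, L), one has min_{k ∈ N₂(L,r)} λ₁^{B_{kr, 3r/2}}(A, V) − K/r² ≤ λ₁^{B_{0,L}}(A, V) ≤ min_{k ∈ N₁(L,r)} λ₁^{B_{kr, r}}(A, V), where N₁(L,r) = {k ∈ ℤ² : B_{kr, r} ⊆ B_{0,L}} and N₂(L,r) = {k ∈ ℤ² : B_{kr, 3r/2} ∩ B_{0,L} ≠ ∅}. -/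
open Complex

open MeasureTheory

noncomputable def etaAl (x : ℝ) : ℝ := Real.pi / 2 * Real.smoothTransition (5 / 2 * x + 7 / 4)

noncomputable def etaF (x : ℝ) : ℝ := Real.cos (etaAl (x - 1)) * Real.sin (etaAl x)

lemma etaAl_lo {x : ℝ} (h : x ≤ -7/10) : etaAl x = 0 := by
  unfold etaAl
  rw [Real.smoothTransition.zero_of_nonpos (by linarith)]; simp

lemma etaAl_hi {x : ℝ} (h : -3/10 ≤ x) : etaAl x = Real.pi / 2 := by
  unfold etaAl
  rw [Real.smoothTransition.one_of_one_le (by linarith)]; simp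

lemma etaAl_smooth : ContDiff ℝ (⊤ : ℕ∞) etaAl := by
  unfold etaAl
  exact contDiff_const.mul (Real.smoothTransition.contDiff.comp (by fun_prop))

lemma etaF_smooth : ContDiff ℝ (⊤ : ℕ∞) etaF := by
  unfold etaF
  have h := etaAl_smooth
  exact (Real.contDiff_cos.comp (h.comp (contDiff_id.sub contDiff_const))).mul
    (Real.contDiff_sin.comp h)

lemma etaF_tele (x : ℝ) :
    etaF x ^ 2 = Real.sin (etaAl x) ^ 2 - Real.sin (etaAl (x - 1)) ^ 2 := by
  unfold etaF
  rcases le_total x (3/10) with h | h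
  · rw [etaAl_lo (x := x - 1) (by linarith)]; simp
  · rw [etaAl_hi (x := x) (by linarith)]; simp [Real.cos_sq']

lemma etaF_supp {x : ℝ} (h : etaF x ≠ 0) : |x| ≤ 7/10 := by
  by_contra hc
  apply h
  rw [not_le, lt_abs] at hc
  unfold etaF
  rcases hc with hc | hc
  · rw [etaAl_hi (x := x - 1) (by linarith)]; simp
  · rw [etaAl_lo (x := x) (by linarith)]; simp

lemma etaF_tsupp : tsupport etaF ⊆ {x | |x| ≤ 7/10} :=
  closure_minimal (fun _ hx => etaF_supp hx) (isClosed_le continuous_abs continuous_const)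

lemma etaF_deriv_supp {x : ℝ} (h : deriv etaF x ≠ 0) : |x| ≤ 7/10 := by
  apply etaF_tsupp
  exact support_deriv_subset h

lemma etaF_hcs : HasCompactSupport etaF := by
  apply HasCompactSupport.intro (isCompact_Icc (a := (-7/10 : ℝ)) (b := 7/10))
  intro x hx
  by_contra h
  have := abs_le.1 (etaF_supp h)
  exact hx ⟨by linarith, by linarith⟩

lemma etaF_deriv_bdd : ∃ C : ℝ, 0 < C ∧ ∀ x, deriv etaF x ^ 2 ≤ C := by
  have hc : Continuous (deriv etaF) := etaF_smooth.continuous_deriv (by simp)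
  obtain ⟨C, hC⟩ := hc.bounded_above_of_compact_support etaF_hcs.deriv
  refine ⟨C ^ 2 + 1, by positivity, fun x => ?_⟩
  have h1 := hC x
  rw [Real.norm_eq_abs] at h1
  have : |deriv etaF x| ^ 2 ≤ C ^ 2 := by gcongr
  rw [sq_abs] at this
  linarith

lemma etaF_sum (N : ℕ) (t : ℝ) (h : |t| + 1 ≤ N) :
    ∑ i ∈ Finset.range (2 * N), etaF (t - ((i : ℝ) - N)) ^ 2 = 1 := by
  have h1 := (abs_le.1 (le_refl |t|)).1
  have h2 := (abs_le.1 (le_refl |t|)).2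
  have : ∀ i ∈ Finset.range (2 * N), etaF (t - ((i : ℝ) - N)) ^ 2 =
      (fun i : ℕ => Real.sin (etaAl (t - ((i : ℝ) - N))) ^ 2) i -
      (fun i : ℕ => Real.sin (etaAl (t - ((i : ℝ) - N))) ^ 2) (i + 1) := by
    intro i _
    rw [etaF_tele]
    simp only [Nat.cast_add, Nat.cast_one]
    rw [show t - ((i : ℝ) - N) - 1 = t - ((i : ℝ) + 1 - N) by ring]
  rw [Finset.sum_congr rfl this, Finset.sum_range_sub']
  push_cast
  rw [etaAl_hi (by linarith), etaAl_lo (by linarith)]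
  simp

lemma etaF_dsum {C : ℝ} (hC0 : 0 < C) (hC : ∀ x, deriv etaF x ^ 2 ≤ C) (N n : ℕ) (t : ℝ) :
    ∑ i ∈ Finset.range n, deriv etaF (t - ((i : ℝ) - N)) ^ 2 ≤ 2 * C := by
  set s := t + N with hs
  have h1 : ∀ i ∈ Finset.range n, deriv etaF (t - ((i : ℝ) - N)) ^ 2 ≠ 0 →
      i ∈ ({⌊s⌋₊, ⌊s⌋₊ + 1} : Finset ℕ) := by
    intro i _ hne
    have h := abs_le.1 (etaF_deriv_supp (fun h0 => hne (by rw [h0]; simp)))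
    have hf := Nat.lt_floor_add_one s
    have hA : i < ⌊s⌋₊ + 2 := by
      have : (i : ℝ) < (⌊s⌋₊ : ℝ) + 2 := by linarith
      exact_mod_cast this
    have hB : ⌊s⌋₊ < i + 1 := by
      by_contra hc
      push Not at hc
      have := (Nat.le_floor_iff' (by omega)).1 hc
      push_cast at this
      linarith
    simp
    omega
  calc _ = ∑ i ∈ (Finset.range n).filter (fun i : ℕ => deriv etaF (t - ((i : ℝ) - N)) ^ 2 ≠ 0),
        deriv etaF (t - ((i : ℝ) - N)) ^ 2 := (Finset.sum_filter_ne_zero _).symm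
    _ ≤ ∑ i ∈ ({⌊s⌋₊, ⌊s⌋₊ + 1} : Finset ℕ), deriv etaF (t - ((i : ℝ) - N)) ^ 2 := by
        apply Finset.sum_le_sum_of_subset_of_nonneg
        · intro i hi
          rw [Finset.mem_filter] at hi
          exact h1 i hi.1 hi.2
        · intros; positivity
    _ ≤ ∑ i ∈ ({⌊s⌋₊, ⌊s⌋₊ + 1} : Finset ℕ), C := Finset.sum_le_sum fun i _ => hC _
    _ ≤ 2 * C := by
        rw [Finset.sum_const, Finset.card_pair (by simp)]; simp

/-! 2D cutoffs -/

noncomputable def chiF (r : ℝ) (k : Fin 2 → ℝ) (x : Fin 2 → ℝ) : ℝ :=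
  etaF (x 0 / r - k 0) * etaF (x 1 / r - k 1)

lemma chiF_smooth (r : ℝ) (k : Fin 2 → ℝ) : ContDiff ℝ (⊤ : ℕ∞) (chiF r k) := by
  unfold chiF
  exact (etaF_smooth.comp (by fun_prop)).mul (etaF_smooth.comp (by fun_prop))

lemma etaComp_hasF (r c : ℝ) (j : Fin 2) (x : Fin 2 → ℝ) :
    HasFDerivAt (fun x : Fin 2 → ℝ => etaF (x j / r - c))
      (deriv etaF (x j / r - c) • (r⁻¹ • (ContinuousLinearMap.proj j : (Fin 2 → ℝ) →L[ℝ] ℝ))) x := by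
  have h1 : HasDerivAt etaF (deriv etaF (x j / r - c)) (x j / r - c) :=
    (etaF_smooth.differentiable (by simp) _).hasDerivAt
  have h2 : HasFDerivAt (fun x : Fin 2 → ℝ => x j / r - c)
      (r⁻¹ • (ContinuousLinearMap.proj j : (Fin 2 → ℝ) →L[ℝ] ℝ)) x := by
    have := ((ContinuousLinearMap.proj j : (Fin 2 → ℝ) →L[ℝ] ℝ).hasFDerivAt (x := x)).const_mul r⁻¹
    have h3 := this.sub_const c
    have e : (fun x : Fin 2 → ℝ => x j / r - c) = fun y => r⁻¹ *
        (ContinuousLinearMap.proj j : (Fin 2 → ℝ) →L[ℝ] ℝ) y - c := by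
      funext y
      simp [div_eq_inv_mul]
    rw [e]
    exact h3
  exact h1.comp_hasFDerivAt x h2

lemma chiF_pd0 (r : ℝ) (k x : Fin 2 → ℝ) :
    pdR 0 (chiF r k) x = r⁻¹ * (deriv etaF (x 0 / r - k 0) * etaF (x 1 / r - k 1)) := by
  have h := ((etaComp_hasF r (k 0) 0 x).mul (etaComp_hasF r (k 1) 1 x)).fderiv
  unfold pdR
  change fderiv ℝ (fun x : Fin 2 → ℝ => etaF (x 0 / r - k 0) * etaF (x 1 / r - k 1)) x _ = _
  erw [h]
  simp
  ring

lemma chiF_pd1 (r : ℝ) (k x : Fin 2 → ℝ) :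
    pdR 1 (chiF r k) x = r⁻¹ * (etaF (x 0 / r - k 0) * deriv etaF (x 1 / r - k 1)) := by
  have h := ((etaComp_hasF r (k 0) 0 x).mul (etaComp_hasF r (k 1) 1 x)).fderiv
  unfold pdR
  change fderiv ℝ (fun x : Fin 2 → ℝ => etaF (x 0 / r - k 0) * etaF (x 1 / r - k 1)) x _ = _
  erw [h]
  simp
  ring

lemma chiF_tsupp {r : ℝ} (hr : 0 < r) (k : Fin 2 → ℝ) :
    tsupport (chiF r k) ⊆ box (fun j => k j * r) (3 * r / 2) := by
  have h1 : tsupport (chiF r k) ⊆ {x | ∀ j, |x j / r - k j| ≤ 7/10} := by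
    apply closure_minimal
    · intro x hx
      have := mul_ne_zero_iff.1 hx
      intro j
      fin_cases j
      · exact etaF_supp this.1
      · exact etaF_supp this.2
    · simp only [Set.ofPred_forall]
      exact isClosed_iInter fun j => isClosed_le (by fun_prop) continuous_const
  intro x hx j
  have h2 := h1 hx j
  have : x j - k j * r = (x j / r - k j) * r := by field_simp
  simp only
  rw [this, abs_mul, abs_of_pos hr]
  nlinarith

noncomputable def idxS (N : ℕ) : Finset (ℕ × ℕ) := Finset.range (2 * N) ×ˢ Finset.range (2 * N)

def idxK (N : ℕ) (p : ℕ × ℕ) : Fin 2 → ℤ := ![(p.1 : ℤ) - N, (p.2 : ℤ) - N]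

noncomputable def chiP (r : ℝ) (N : ℕ) (p : ℕ × ℕ) : (Fin 2 → ℝ) → ℝ :=
  chiF r (fun j => (idxK N p j : ℝ))

lemma chiP_sum (r : ℝ) (N : ℕ) (x : Fin 2 → ℝ) (h : ∀ j, |x j / r| + 1 ≤ N) :
    ∑ p ∈ idxS N, chiP r N p x ^ 2 = 1 := by
  have h0 := etaF_sum N _ (h 0)
  have h1 := etaF_sum N _ (h 1)
  have h2 := congrArg₂ (fun a b : ℝ => a * b) h0 h1
  simp only [mul_one, Finset.sum_mul_sum] at h2
  rw [← h2, idxS, Finset.sum_product]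
  simp only [chiP, chiF, idxK, mul_pow]
  simp

lemma chiP_dsum {C : ℝ} (hC0 : 0 < C) (hC : ∀ x, deriv etaF x ^ 2 ≤ C)
    (r : ℝ) (N : ℕ) (x : Fin 2 → ℝ) (h : ∀ j, |x j / r| + 1 ≤ N) :
    ∑ p ∈ idxS N, ∑ j, pdR j (chiP r N p) x ^ 2 ≤ 4 * C / r ^ 2 := by
  have h0 := etaF_sum N _ (h 0)
  have h1 := etaF_sum N _ (h 1)
  have d0 := etaF_dsum hC0 hC N (2 * N) (x 0 / r)
  have d1 := etaF_dsum hC0 hC N (2 * N) (x 1 / r)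
  have e0 : ∑ p ∈ idxS N, pdR 0 (chiP r N p) x ^ 2 = (r ^ 2)⁻¹ *
     ∑ i ∈ Finset.range (2 * N), deriv etaF (x 0 / r - ((i : ℝ) - N)) ^ 2 := by
    rw [← mul_one (∑ i ∈ Finset.range (2 * N), deriv etaF (x 0 / r - ((i : ℝ) - N)) ^ 2), ← h1,
      Finset.sum_mul_sum, idxS, Finset.sum_product, Finset.mul_sum]
    simp only [chiP, chiF_pd0, idxK, mul_pow, Finset.mul_sum]
    simp
  have e1 : ∑ p ∈ idxS N, pdR 1 (chiP r N p) x ^ 2 = (r ^ 2)⁻¹ *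
     ∑ i ∈ Finset.range (2 * N), deriv etaF (x 1 / r - ((i : ℝ) - N)) ^ 2 := by
    rw [← one_mul (∑ i ∈ Finset.range (2 * N), deriv etaF (x 1 / r - ((i : ℝ) - N)) ^ 2), ← h0,
      Finset.sum_mul_sum, idxS, Finset.sum_product, Finset.mul_sum]
    simp only [chiP, chiF_pd1, idxK, mul_pow, Finset.mul_sum]
    simp
  simp only [Fin.sum_univ_two]
  rw [Finset.sum_add_distrib, e0, e1, ← mul_add, div_eq_inv_mul (4 * C)]
  have : (0:ℝ) ≤ (r^2)⁻¹ := by positivity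
  apply mul_le_mul_of_nonneg_left _ this
  linarith

lemma chiP_cross (r : ℝ) (N : ℕ) (x : Fin 2 → ℝ) (h : ∀ j, |x j / r| + 1 < N) (j : Fin 2) :
    ∑ p ∈ idxS N, chiP r N p x * pdR j (chiP r N p) x = 0 := by
  have hev : (fun y => ∑ p ∈ idxS N, chiP r N p y ^ 2) =ᶠ[nhds x] fun _ => (1 : ℝ) := by
    have : ∀ᶠ y in nhds x, ∀ j : Fin 2, |y j / r| + 1 < N := by
      rw [Filter.eventually_all]
      intro j
      exact (Continuous.continuousAt (by fun_prop)).eventually_lt_const (h j)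
    filter_upwards [this] with y hy
    exact chiP_sum r N y fun j => (hy j).le
  have h1 := hev.fderiv_eq (𝕜 := ℝ)
  have hd : ∀ p, HasFDerivAt (chiP r N p) (fderiv ℝ (chiP r N p) x) x := fun p =>
    ((chiF_smooth r _).differentiable (by simp) x).hasFDerivAt
  have h2 : HasFDerivAt (fun y => ∑ p ∈ idxS N, chiP r N p y ^ 2)
      (∑ p ∈ idxS N, (2 * chiP r N p x) • fderiv ℝ (chiP r N p) x) x := by
    apply HasFDerivAt.fun_sum
    intro p _
    simpa using (hd p).pow 2
  rw [h2.fderiv] at h1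
  have h3 := congrArg (fun T => T (Pi.single j (1:ℝ))) h1
  simp [mul_assoc, ← Finset.mul_sum] at h3
  exact h3

/-! Quadratic form -/

noncomputable def dens (A : (Fin 2 → ℝ) → Fin 2 → ℝ)
    (V : (Fin 2 → ℝ) → ℝ) (u : (Fin 2 → ℝ) → ℂ) (x : Fin 2 → ℝ) : ℝ :=
  (∑ j : Fin 2, ‖Complex.I * pd j u x + (A x j : ℂ) * u x‖ ^ 2) + V x * ‖u x‖ ^ 2

lemma pd_zero {u : (Fin 2 → ℝ) → ℂ} {x : Fin 2 → ℝ} (h : x ∉ tsupport u) (j : Fin 2) :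
    pd j u x = 0 := by
  have : fderiv ℝ u x = 0 := by
    by_contra hc
    exact h (support_fderiv_subset ℝ hc)
  simp [pd, this]

lemma dens_zero (A : (Fin 2 → ℝ) → Fin 2 → ℝ) (V : (Fin 2 → ℝ) → ℝ)
    {u : (Fin 2 → ℝ) → ℂ} {x : Fin 2 → ℝ} (h : x ∉ tsupport u) : dens A V u x = 0 := by
  simp [dens, pd_zero h, image_eq_zero_of_notMem_tsupport h]

lemma qform_eq {B : Set (Fin 2 → ℝ)} (A : (Fin 2 → ℝ) → Fin 2 → ℝ) (V : (Fin 2 → ℝ) → ℝ)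
    {u : (Fin 2 → ℝ) → ℂ} (hu : testFun B u) : qform B A V u = ∫ x, dens A V u x := by
  unfold qform
  apply setIntegral_eq_integral_of_forall_compl_eq_zero
  intro x hx
  exact dens_zero A V fun h => hx (hu.2.2 h)

lemma mass_eq {B : Set (Fin 2 → ℝ)}
    {u : (Fin 2 → ℝ) → ℂ} (hu : testFun B u) : ∫ x in B, ‖u x‖ ^ 2 = ∫ x, ‖u x‖ ^ 2 := by
  apply setIntegral_eq_integral_of_forall_compl_eq_zero
  intro x hx
  simp [image_eq_zero_of_notMem_tsupport fun h => hx (hu.2.2 h)]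

lemma mass_int {B : Set (Fin 2 → ℝ)}
    {u : (Fin 2 → ℝ) → ℂ} (hu : testFun B u) : Integrable (fun x => ‖u x‖ ^ 2) := by
  have := hu.1.continuous
  apply Continuous.integrable_of_hasCompactSupport (by fun_prop)
  exact hu.2.1.comp_left (g := fun z : ℂ => ‖z‖ ^ 2) (by simp)

lemma dens_int {B : Set (Fin 2 → ℝ)} {A : (Fin 2 → ℝ) → Fin 2 → ℝ} {V : (Fin 2 → ℝ) → ℝ}
    (hA : Continuous A) (hV : Continuous V)
    {u : (Fin 2 → ℝ) → ℂ} (hu : testFun B u) : Integrable (dens A V u) := by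
  have h1 := hu.1.continuous
  have h2 : ∀ j, Continuous (pd j u) := fun j =>
    (hu.1.continuous_fderiv (by simp)).clm_apply continuous_const
  apply Continuous.integrable_of_hasCompactSupport
  · unfold dens
    fun_prop
  · exact HasCompactSupport.intro hu.2.1 fun x hx => dens_zero A V hx

lemma dens_ge (A : (Fin 2 → ℝ) → Fin 2 → ℝ) {B : Set (Fin 2 → ℝ)} {V : (Fin 2 → ℝ) → ℝ} {c : ℝ}
    (hc : ∀ x ∈ B, c ≤ V x) {u : (Fin 2 → ℝ) → ℂ} (hu : testFun B u) (x : Fin 2 → ℝ) :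
    c * ‖u x‖ ^ 2 ≤ dens A V u x := by
  by_cases hx : x ∈ tsupport u
  · unfold dens
    have h1 : c * ‖u x‖ ^ 2 ≤ V x * ‖u x‖ ^ 2 := by
      have := hc x (hu.2.2 hx)
      gcongr
    have h2 : 0 ≤ ∑ j : Fin 2, ‖Complex.I * pd j u x + (A x j : ℂ) * u x‖ ^ 2 := by positivity
    linarith
  · rw [dens_zero A V hx, image_eq_zero_of_notMem_tsupport hx]; simp

def lset (B : Set (Fin 2 → ℝ)) (A : (Fin 2 → ℝ) → Fin 2 → ℝ)
    (V : (Fin 2 → ℝ) → ℝ) : Set ℝ :=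
  { E | ∃ u, testFun B u ∧ (∫ x in B, ‖u x‖ ^ 2) = 1 ∧ E = qform B A V u }

lemma lset_lb {B : Set (Fin 2 → ℝ)} {A : (Fin 2 → ℝ) → Fin 2 → ℝ} {V : (Fin 2 → ℝ) → ℝ}
    (hA : Continuous A) (hV : Continuous V) {c : ℝ}
    (hc : ∀ x ∈ B, c ≤ V x) : c ∈ lowerBounds (lset B A V) := by
  rintro E ⟨u, hu, hm, rfl⟩
  rw [qform_eq A V hu]
  rw [mass_eq hu] at hm
  calc c = ∫ x, c * ‖u x‖ ^ 2 := by rw [integral_const_mul, hm, mul_one]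
    _ ≤ _ := integral_mono ((mass_int hu).const_mul c) (dens_int hA hV hu) (dens_ge A hc hu)

lemma qform_smul {B : Set (Fin 2 → ℝ)} (A : (Fin 2 → ℝ) → Fin 2 → ℝ) (V : (Fin 2 → ℝ) → ℝ)
    {u : (Fin 2 → ℝ) → ℂ} (hu : testFun B u) (hpos : 0 < ∫ x, ‖u x‖ ^ 2) :
    (∫ x, dens A V u x) / (∫ x, ‖u x‖ ^ 2) ∈ lset B A V := by
  set m := ∫ x, ‖u x‖ ^ 2 with hm
  set s : ℝ := (Real.sqrt m)⁻¹ with hs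
  have hs2 : s ^ 2 = m⁻¹ := by rw [hs, inv_pow, Real.sq_sqrt hpos.le]
  have hv : testFun B (fun x => (s : ℂ) * u x) := by
    refine ⟨contDiff_const.mul hu.1, hu.2.1.mul_left, ?_⟩
    exact (tsupport_mul_subset_right (f := fun _ => (s : ℂ)) (g := u)).trans hu.2.2
  refine ⟨_, hv, ?_, ?_⟩
  · rw [mass_eq hv]
    simp only [norm_mul, mul_pow, Complex.norm_real, Real.norm_eq_abs, sq_abs]
    rw [integral_const_mul, hs2, ← hm, inv_mul_cancel₀ hpos.ne']
  · rw [qform_eq A V hv]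
    have : ∀ x, dens A V (fun x => (s : ℂ) * u x) x = s ^ 2 * dens A V u x := by
      intro x
      have hp : ∀ j, pd j (fun x => (s : ℂ) * u x) x = s * pd j u x := by
        intro j
        unfold pd
        rw [fderiv_const_mul (hu.1.differentiable (by simp) x)]
        simp
      have e : ∀ j, Complex.I * (s * pd j u x) + (A x j : ℂ) * (s * u x) =
        (s : ℂ) * (Complex.I * pd j u x + (A x j : ℂ) * u x) := fun j => by ring
      simp only [dens, hp, e, norm_mul (s : ℂ), mul_pow, Complex.norm_real, Real.norm_eq_abs, sq_abs]
      rw [← Finset.mul_sum]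
      ring
    simp only [this]
    rw [integral_const_mul, hs2, div_eq_inv_mul]

lemma mass_pos {B : Set (Fin 2 → ℝ)} {u : (Fin 2 → ℝ) → ℂ} (hu : testFun B u) {x : Fin 2 → ℝ}
    (hx : u x ≠ 0) : 0 < ∫ x, ‖u x‖ ^ 2 := by
  have := hu.1.continuous
  apply Continuous.integral_pos_of_hasCompactSupport_nonneg_nonzero (x := x) (by fun_prop)
  · exact hu.2.1.comp_left (g := fun z : ℂ => ‖z‖ ^ 2) (by simp)
  · intro x; positivity
  · simpa using hx

lemma box_open (c : Fin 2 → ℝ) (L : ℝ) : IsOpen (box c L) := by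
  unfold box
  simp only [Set.ofPred_forall]
  exact isOpen_iInter_of_finite fun j => isOpen_lt (by fun_prop) continuous_const

lemma lset_ne (c : Fin 2 → ℝ) {L : ℝ} (hL : 0 < L) (A : (Fin 2 → ℝ) → Fin 2 → ℝ)
    (V : (Fin 2 → ℝ) → ℝ) : (lset (box c L) A V).Nonempty := by
  have hmem : c ∈ box c L := fun j => by simpa using hL
  obtain ⟨f, hf1, hf2, hf3, -, hf5⟩ := exists_contDiff_tsupport_subset (n := ⊤)
    ((box_open c L).mem_nhds hmem)
  have hv : testFun (box c L) (fun x => (f x : ℂ)) := by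
    refine ⟨Complex.ofRealCLM.contDiff.comp hf3, hf2.comp_left (g := Complex.ofReal) (by simp), ?_⟩
    refine subset_trans (closure_mono ?_) hf1
    intro x hx
    simpa using hx
  exact ⟨_, qform_smul A V hv (mass_pos hv (x := c) (by simp [hf5]))⟩

lemma V_bdd {V : (Fin 2 → ℝ) → ℝ} (hV : Continuous V) (R : ℝ) :
    ∃ c, ∀ x ∈ Metric.closedBall (0 : Fin 2 → ℝ) R, c ≤ V x := by
  obtain ⟨c, hc⟩ := (isCompact_closedBall (0 : Fin 2 → ℝ) R).bddBelow_image hV.continuousOn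
  exact ⟨c, fun x hx => hc ⟨x, hx, rfl⟩⟩

lemma box_sub (c : Fin 2 → ℝ) (L : ℝ) : box c L ⊆ Metric.closedBall 0 (‖c‖ + |L| / 2) := by
  intro x hx
  rw [mem_closedBall_zero_iff]
  have : ‖x - c‖ ≤ |L| / 2 := by
    rw [pi_norm_le_iff_of_nonneg (by positivity)]
    intro j
    have := hx j
    have := le_abs_self L
    rw [Pi.sub_apply, Real.norm_eq_abs]
    linarith
  calc ‖x‖ = ‖c + (x - c)‖ := by congr 1; abel
    _ ≤ _ := (norm_add_le _ _).trans (by gcongr)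

lemma lset_bdd (c : Fin 2 → ℝ) (L : ℝ) {A : (Fin 2 → ℝ) → Fin 2 → ℝ} {V : (Fin 2 → ℝ) → ℝ}
    (hA : Continuous A) (hV : Continuous V) : BddBelow (lset (box c L) A V) := by
  obtain ⟨b, hb⟩ := V_bdd hV (‖c‖ + |L| / 2)
  exact ⟨b, lset_lb hA hV fun x hx => hb x (box_sub c L hx)⟩

lemma lam_le (c : Fin 2 → ℝ) (L : ℝ) {A : (Fin 2 → ℝ) → Fin 2 → ℝ} {V : (Fin 2 → ℝ) → ℝ}
    (hA : Continuous A) (hV : Continuous V) {u : (Fin 2 → ℝ) → ℂ} (hu : testFun (box c L) u) :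
    lam1 (box c L) A V * ∫ x, ‖u x‖ ^ 2 ≤ ∫ x, dens A V u x := by
  by_cases h : ∃ x, u x ≠ 0
  · obtain ⟨x, hx⟩ := h
    have hp := mass_pos hu hx
    have : lam1 (box c L) A V ≤ _ := csInf_le (lset_bdd c L hA hV) (qform_smul A V hu hp)
    rwa [le_div_iff₀ hp] at this
  · push Not at h
    have h0 : u = 0 := funext h
    have hd : dens A V u = 0 := by
      funext x
      exact dens_zero A V (by simp [h0])
    simp [hd, h]

lemma lam_anti {c c' : Fin 2 → ℝ} {L L' : ℝ} {A : (Fin 2 → ℝ) → Fin 2 → ℝ} {V : (Fin 2 → ℝ) → ℝ}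
    (hA : Continuous A) (hV : Continuous V) (hL' : 0 < L') (hs : box c' L' ⊆ box c L) :
    lam1 (box c L) A V ≤ lam1 (box c' L') A V := by
  apply csInf_le_csInf (lset_bdd c L hA hV) (lset_ne c' hL' A V)
  rintro E ⟨u, hu, hm, rfl⟩
  have hu' : testFun (box c L) u := ⟨hu.1, hu.2.1, hu.2.2.trans hs⟩
  exact ⟨u, hu', by rw [mass_eq hu', ← mass_eq hu, hm], by rw [qform_eq A V hu', qform_eq A V hu]⟩

/-! IMS localization -/

lemma ims_alg (a q : ℝ) (D w : ℂ) :
    ‖(a : ℂ) * D + Complex.I * q * w‖ ^ 2 =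
      a ^ 2 * ‖D‖ ^ 2 + q ^ 2 * ‖w‖ ^ 2 + a * q * (2 * (D.im * w.re - D.re * w.im)) := by
  simp only [Complex.sq_norm, Complex.normSq_apply]
  simp
  ring

lemma pd_mul {f : (Fin 2 → ℝ) → ℝ} {u : (Fin 2 → ℝ) → ℂ} (hf : Differentiable ℝ f)
    (hu : Differentiable ℝ u) (j : Fin 2) (x : Fin 2 → ℝ) :
    pd j (fun x => (f x : ℂ) * u x) x = f x * pd j u x + pdR j f x * u x := by
  have h1 : HasFDerivAt (fun x => (f x : ℂ)) (Complex.ofRealCLM.comp (fderiv ℝ f x)) x :=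
    Complex.ofRealCLM.hasFDerivAt.comp x (hf x).hasFDerivAt
  have h2 := (h1.mul (hu x).hasFDerivAt).fderiv
  unfold pd
  erw [h2]
  simp [pdR, mul_comm]

lemma ims {ι : Type*} (S : Finset ι) (χ : ι → (Fin 2 → ℝ) → ℝ)
    (hχ : ∀ p, Differentiable ℝ (χ p)) (A : (Fin 2 → ℝ) → Fin 2 → ℝ) (V : (Fin 2 → ℝ) → ℝ)
    {u : (Fin 2 → ℝ) → ℂ} (hu : Differentiable ℝ u) (x : Fin 2 → ℝ)
    (h1 : ∑ p ∈ S, χ p x ^ 2 = 1) (h2 : ∀ j, ∑ p ∈ S, χ p x * pdR j (χ p) x = 0) :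
    ∑ p ∈ S, dens A V (fun x => (χ p x : ℂ) * u x) x =
      dens A V u x + (∑ p ∈ S, ∑ j, pdR j (χ p) x ^ 2) * ‖u x‖ ^ 2 := by
  have e : ∀ p j, ‖Complex.I * pd j (fun x => (χ p x : ℂ) * u x) x + (A x j : ℂ) * (χ p x * u x)‖ ^ 2
      = χ p x ^ 2 * ‖Complex.I * pd j u x + (A x j : ℂ) * u x‖ ^ 2 + pdR j (χ p) x ^ 2 * ‖u x‖ ^ 2
       + χ p x * pdR j (χ p) x * (2 * ((Complex.I * pd j u x + (A x j : ℂ) * u x).im * (u x).re -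
          (Complex.I * pd j u x + (A x j : ℂ) * u x).re * (u x).im)) := by
    intro p j
    rw [← ims_alg, pd_mul (hχ p) hu]
    congr 2
    ring
  have e2 : ∀ p, ‖(χ p x : ℂ) * u x‖ ^ 2 = χ p x ^ 2 * ‖u x‖ ^ 2 := by
    intro p
    simp [mul_pow]
  simp only [dens, e, e2, Fin.sum_univ_two, Finset.sum_add_distrib, ← Finset.sum_mul, h1, h2,
    mul_left_comm (V x)]
  ring

theorem lower_bd {C : ℝ} (hC0 : 0 < C) (hC : ∀ x, deriv etaF x ^ 2 ≤ C)
    {A : (Fin 2 → ℝ) → Fin 2 → ℝ} {V : (Fin 2 → ℝ) → ℝ}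
    (hA : Continuous A) (hV : Continuous V) {L r lam : ℝ} (hr : 0 < r)
    (hlam : ∀ k : Fin 2 → ℤ, (box (fun j => (k j : ℝ) * r) (3 * r / 2) ∩ box 0 L).Nonempty →
      lam ≤ lam1 (box (fun j => (k j : ℝ) * r) (3 * r / 2)) A V)
    {u : (Fin 2 → ℝ) → ℂ} (hu : testFun (box 0 L) u) (hm : ∫ x, ‖u x‖ ^ 2 = 1) :
    lam - 4 * C / r ^ 2 ≤ ∫ x, dens A V u x := by
  obtain ⟨N, hN⟩ := exists_nat_gt (L / 2 / r + 1)
  have hbox : ∀ x ∈ tsupport u, ∀ j, |x j / r| + 1 < N := by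
    intro x hx j
    have := hu.2.2 hx j
    simp only [Pi.zero_apply, sub_zero] at this
    rw [abs_div, abs_of_pos hr]
    have : |x j| / r < L / 2 / r := by gcongr
    linarith
  have hχ : ∀ p, ContDiff ℝ (⊤ : ℕ∞) (chiP r N p) := fun p => chiF_smooth r _
  set v : ℕ × ℕ → (Fin 2 → ℝ) → ℂ := fun p x => (chiP r N p x : ℂ) * u x with hv
  have hvt : ∀ p, testFun (box (fun j => (idxK N p j : ℝ) * r) (3 * r / 2)) (v p) := by
    intro p
    refine ⟨(Complex.ofRealCLM.contDiff.comp (hχ p)).mul hu.1, hu.2.1.mul_left, ?_⟩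
    refine subset_trans (closure_mono ?_) (chiF_tsupp hr (fun j => (idxK N p j : ℝ)))
    intro x hx
    have := mul_ne_zero_iff.1 hx
    exact Complex.ofReal_ne_zero.1 this.1
  have hvs : ∀ p, lam * ∫ x, ‖v p x‖ ^ 2 ≤ ∫ x, dens A V (v p) x := by
    intro p
    by_cases h : ∃ x, v p x ≠ 0
    · obtain ⟨x, hx⟩ := h
      have hne := hlam (idxK N p) ⟨x, (hvt p).2.2 (subset_tsupport _ hx),
        hu.2.2 (subset_tsupport _ (mul_ne_zero_iff.1 hx).2)⟩
      refine le_trans ?_ (lam_le _ _ hA hV (hvt p))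
      exact mul_le_mul_of_nonneg_right hne (mass_pos (hvt p) hx).le
    · push Not at h
      refine le_trans (le_of_eq ?_) (lam_le _ _ hA hV (hvt p))
      simp [h]
  have hpt : ∀ x, ∑ p ∈ idxS N, dens A V (v p) x ≤ dens A V u x + 4 * C / r ^ 2 * ‖u x‖ ^ 2 := by
    intro x
    by_cases hx : x ∈ tsupport u
    · have hb := hbox x hx
      rw [ims (idxS N) (chiP r N) (fun p => (hχ p).differentiable (by simp)) A V
        (hu.1.differentiable (by simp)) x (chiP_sum r N x fun j => (hb j).le)
        (chiP_cross r N x hb)]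
      have := chiP_dsum hC0 hC r N x fun j => (hb j).le
      gcongr
    · rw [dens_zero A V hx, image_eq_zero_of_notMem_tsupport hx, Finset.sum_eq_zero]
      · simp
      · intro p _
        exact dens_zero A V fun h => hx (tsupport_mul_subset_right h)
  have hpm : ∀ x, ∑ p ∈ idxS N, ‖v p x‖ ^ 2 = ‖u x‖ ^ 2 := by
    intro x
    by_cases hx : x ∈ tsupport u
    · have e2 : ∀ p, ‖v p x‖ ^ 2 = chiP r N p x ^ 2 * ‖u x‖ ^ 2 := by
        intro p
        simp [hv, mul_pow]
      simp only [e2]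
      rw [← Finset.sum_mul, chiP_sum r N x fun j => (hbox x hx j).le, one_mul]
    · simp [hv, image_eq_zero_of_notMem_tsupport hx]
  have I1 : ∫ x, ∑ p ∈ idxS N, dens A V (v p) x = ∑ p ∈ idxS N, ∫ x, dens A V (v p) x :=
    integral_finsetSum _ fun p _ => dens_int hA hV (hvt p)
  have I2 : ∑ p ∈ idxS N, ∫ x, ‖v p x‖ ^ 2 = 1 := by
    rw [← integral_finsetSum _ fun p _ => mass_int (hvt p)]
    simp only [hpm, hm]
  have I3 : ∫ x, ∑ p ∈ idxS N, dens A V (v p) x ≤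
      ∫ x, (dens A V u x + 4 * C / r ^ 2 * ‖u x‖ ^ 2) :=
    integral_mono (integrable_finsetSum _ fun p _ => dens_int hA hV (hvt p))
      ((dens_int hA hV hu).add ((mass_int hu).const_mul _)) hpt
  rw [integral_add (dens_int hA hV hu) ((mass_int hu).const_mul _), integral_const_mul, hm,
    I1] at I3
  have I4 : lam ≤ ∑ p ∈ idxS N, ∫ x, dens A V (v p) x := by
    calc lam = ∑ p ∈ idxS N, lam * ∫ x, ‖v p x‖ ^ 2 := by rw [← Finset.mul_sum, I2, mul_one]
      _ ≤ _ := Finset.sum_le_sum fun p _ => hvs p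
  linarith

/-- Eigenvalue comparison between a large box and sub-boxes: there is `K > 0`
such that for continuous `A`, `V`, `L ≥ 1` and `0 < r < L`,
`min_{k ∈ N₂} λ₁^{B_{kr,3r/2}}(A,V) − K/r² ≤ λ₁^{B_{0,L}}(A,V) ≤ min_{k ∈ N₁} λ₁^{B_{kr,r}}(A,V)`. -/
theorem lam1_boxes_comparison :
    ∃ K > (0 : ℝ), ∀ (A : (Fin 2 → ℝ) → Fin 2 → ℝ) (V : (Fin 2 → ℝ) → ℝ),
      Continuous A → Continuous V → ∀ L r : ℝ, 1 ≤ L → 0 < r → r < L →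
        sInf ((fun k : Fin 2 → ℤ =>
              lam1 (box (fun j => (k j : ℝ) * r) (3 * r / 2)) A V) ''
            {k | (box (fun j => (k j : ℝ) * r) (3 * r / 2) ∩ box 0 L).Nonempty})
            - K / r ^ 2
          ≤ lam1 (box 0 L) A V ∧
        lam1 (box 0 L) A V
          ≤ sInf ((fun k : Fin 2 → ℤ =>
              lam1 (box (fun j => (k j : ℝ) * r) r) A V) ''
            {k | box (fun j => (k j : ℝ) * r) r ⊆ box 0 L}) := by
  obtain ⟨C, hC0, hC⟩ := etaF_deriv_bdd
  refine ⟨4 * C, by positivity, ?_⟩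
  intro A V hA hV L r hL hr hrL
  have hL0 : 0 < L := by linarith
  constructor
  · apply le_csInf (lset_ne 0 hL0 A V)
    rintro E ⟨u, hu, hm, rfl⟩
    rw [qform_eq A V hu]
    rw [mass_eq hu] at hm
    apply lower_bd hC0 hC hA hV hr _ hu hm
    intro k hk
    refine csInf_le ?_ (Set.mem_image_of_mem _ hk)
    obtain ⟨b, hb⟩ := V_bdd hV (L / 2 + 3 * r)
    refine ⟨b, ?_⟩
    rintro _ ⟨k', ⟨y, hy1, hy2⟩, rfl⟩
    apply le_csInf (lset_ne _ (by positivity) A V)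
    apply lset_lb hA hV
    intro x hx
    apply hb
    rw [mem_closedBall_zero_iff, pi_norm_le_iff_of_nonneg (by positivity)]
    intro j
    have a1 := abs_lt.1 (hx j)
    have a2 := abs_lt.1 (hy1 j)
    have a3 := abs_lt.1 (hy2 j)
    simp only [Pi.zero_apply, sub_zero] at a3
    rw [Real.norm_eq_abs, abs_le]
    constructor <;> linarith [a1.1, a1.2, a2.1, a2.2, a3.1, a3.2]
  · apply le_csInf
    · refine ⟨_, 0, ?_, rfl⟩
      intro y hy j
      have := hy j
      simp at this ⊢
      linarith
    · rintro _ ⟨k, hk, rfl⟩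
      exact lam_anti hA hV hr hk
end
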